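/- For any integer s with n/2 < s ≤ n, let T' consist of γ_s together with all tuples of weight ⌊n/2⌋ that are incomparable with γ_s, and let T'' consist of all tuples of weight ⌊n/2⌋+1 that are incomparable with γ_s. Then (T', T'') ∈ 𝒜_s and (T', T'') has the maximum cardinality among all pairs in 𝒜_s. -/

import Mathlib

/-- The weight of a binary tuple: the number of its 1-components. -/
def bweight {n : ℕ} (α : Fin n → Bool) : ℕ :=
  (Finset.univ.filter fun i => α i = true).card

/-- The tuple `γ_s ∈ Bⁿ` whose first `n - s` components equal `0` and whose
last `s` components equal `1`. -/
def gammaTuple (n s : ℕ) : Fin n → Bool := fun i => decide (n - s ≤ (i : ℕ))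

/-- `T' < T''`: there are no tuples `a ∈ T'`, `b ∈ T''` with `a ≥ b`. -/
def PairBelow {n : ℕ} (T' T'' : Set (Fin n → Bool)) : Prop :=
  ∀ a ∈ T', ∀ b ∈ T'', ¬ b ≤ a

/-- A pair `(T', T'')` of antichains in `Bⁿ` with `T' < T''`. -/
def AntichainPair {n : ℕ} (T' T'' : Set (Fin n → Bool)) : Prop :=
  IsAntichain (· ≤ ·) T' ∧ IsAntichain (· ≤ ·) T'' ∧ PairBelow T' T''

/-- Membership of a pair of antichains in `𝒜_s`: a pair of antichains with
`T' < T''` and `γ_s ∈ T'`. -/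
def MemA {n : ℕ} (s : ℕ) (T' T'' : Set (Fin n → Bool)) : Prop :=
  AntichainPair T' T'' ∧ gammaTuple n s ∈ T'

/-- Membership of a pair of antichains in `𝒜'_t`: a pair of antichains with
`T' < T''` in which every tuple has weight at most `t`. -/
def MemA' {n : ℕ} (t : ℕ) (T' T'' : Set (Fin n → Bool)) : Prop :=
  AntichainPair T' T'' ∧ ∀ α ∈ T' ∪ T'', bweight α ≤ t

/-- The antichain `T'` of Statement 17: `γ_s` together with all tuples of
weight `⌊n/2⌋` incomparable with `γ_s`. -/
def lowerAntichain (n s : ℕ) : Set (Fin n → Bool) :=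
  insert (gammaTuple n s)
    {α | bweight α = n / 2 ∧ ¬ α ≤ gammaTuple n s ∧ ¬ gammaTuple n s ≤ α}

/-- The antichain `T''` of Statement 17: all tuples of weight `⌊n/2⌋ + 1`
incomparable with `γ_s`. -/
def upperAntichain (n s : ℕ) : Set (Fin n → Bool) :=
  {α | bweight α = n / 2 + 1 ∧ ¬ α ≤ gammaTuple n s ∧ ¬ gammaTuple n s ≤ α}

/-!
Identify `Bⁿ` with the subsets of an `n`-element set and let `G` be the support of `γ_s`. If
`(U', U'')` belongs to `𝒜_s`, then `γ_s` is the only member of `U' ∪ U''` below `γ_s`. So it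
remains to show that among the sets not contained in `G`, a union of two antichains has at most as
many members as the two levels `⌊n/2⌋` and `⌊n/2⌋ + 1`.

For this, partition the sets not contained in `G` into saturated chains whose minimal and maximal
cardinalities add up to `n` or `n + 1`: start from the symmetric chain decomposition of the subsets
of `Gᶜ`, remove `∅`, which raises the rank sum of its chain by one, and adjoin the points of `G`
one by one. Two integer intervals whose endpoint sums differ by at most one are nested, so on a
chain with cardinalities `[a, b]` the middle levels `[p, q]` occupy `min (b + 1 - a) (q + 1 - p)`
members, and a family without chains of more than `q + 1 - p` members cannot contain more.
-/

open Finset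

section ChainsOfSets

variable {α : Type*}

lemma injOn_card_of_isChain {C : Set (Finset α)} (hC : IsChain (· ⊆ ·) C) :
    Set.InjOn Finset.card C := fun _ hx _ hy hxy =>
  (hC.total hx hy).elim (fun h => eq_of_subset_of_card_le h hxy.ge)
    (fun h => (eq_of_subset_of_card_le h hxy.le).symm)

/-- A chain of finite sets whose cardinalities are exactly the integers in `[a, b]`. For `b < a`
this is the empty chain. -/
structure IsSaturatedChain (a b : ℕ) (C : Finset (Finset α)) : Prop where
  isChain : IsChain (· ⊆ ·) (C : Set (Finset α))
  image_card : C.image Finset.card = Icc a b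

namespace IsSaturatedChain

variable {a b : ℕ} {C : Finset (Finset α)}

lemma card_mem_Icc (hC : IsSaturatedChain a b C) {x : Finset α} (hx : x ∈ C) :
    #x ∈ Icc a b :=
  hC.image_card ▸ mem_image_of_mem _ hx

lemma card_filter_card_mem (hC : IsSaturatedChain a b C) (S : Finset ℕ) :
    #{x ∈ C | #x ∈ S} = #(Icc a b ∩ S) := by
  rw [← hC.image_card, ← filter_mem_eq_inter, filter_image, card_image_of_injOn]
  exact (injOn_card_of_isChain hC.isChain).mono (coe_subset.2 (filter_subset _ _))

lemma card_eq (hC : IsSaturatedChain a b C) : #C = b + 1 - a := by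
  rw [← card_image_of_injOn (injOn_card_of_isChain hC.isChain), hC.image_card, Nat.card_Icc]

lemma subset_of_card_eq_right (hC : IsSaturatedChain a b C) {x t : Finset α} (hx : x ∈ C)
    (ht : t ∈ C) (htb : #t = b) : x ⊆ t :=
  (hC.isChain.total hx ht).elim id fun h =>
    (eq_of_subset_of_card_le h (htb ▸ (mem_Icc.1 (hC.card_mem_Icc hx)).2)).ge

variable [DecidableEq α]

lemma insert_top (hC : IsSaturatedChain a b C) {t : Finset α} (ht : ∀ x ∈ C, x ⊆ t)
    (htb : #t = b + 1) (hab : a ≤ b + 1) : IsSaturatedChain a (b + 1) (insert t C) where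
  isChain := by
    rw [coe_insert]
    exact hC.isChain.insert fun x hx _ => Or.inr (ht x hx)
  image_card := by
    rw [image_insert, hC.image_card, htb, insert_Icc_right_eq_Icc_add_one hab]

lemma image_card_erase (hC : IsSaturatedChain a b C) {t : Finset α} (ht : t ∈ C) :
    (C.erase t).image Finset.card = (Icc a b).erase #t := by
  rw [← hC.image_card]
  ext i
  simp only [mem_image, mem_erase]
  constructor
  · rintro ⟨x, ⟨hxt, hx⟩, rfl⟩
    exact ⟨fun h => hxt (injOn_card_of_isChain hC.isChain hx ht h), x, hx, rfl⟩
  · rintro ⟨hit, x, hx, rfl⟩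
    exact ⟨x, ⟨fun h => hit (congrArg _ h), hx⟩, rfl⟩

lemma erase_top (hC : IsSaturatedChain a (b + 1) C) {t : Finset α} (ht : t ∈ C)
    (htb : #t = b + 1) : IsSaturatedChain a b (C.erase t) where
  isChain := hC.isChain.mono (by simp)
  image_card := by
    rw [hC.image_card_erase ht, htb]
    grind

lemma erase_bot (hC : IsSaturatedChain a b C) {t : Finset α} (ht : t ∈ C) (hta : #t = a) :
    IsSaturatedChain (a + 1) b (C.erase t) where
  isChain := hC.isChain.mono (by simp)
  image_card := by
    rw [hC.image_card_erase ht, hta]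
    grind

lemma image_insert (hC : IsSaturatedChain a b C) {e : α} (he : ∀ x ∈ C, e ∉ x) :
    IsSaturatedChain (a + 1) (b + 1) (C.image (insert e)) where
  isChain := by
    rw [coe_image]
    exact hC.isChain.image_of_map_rel _ _ (insert e) fun _ _ => insert_subset_insert e
  image_card := by
    have hcard : C.image (Finset.card ∘ insert e) = C.image ((· + 1) ∘ Finset.card) :=
      image_congr fun x hx => card_insert_of_notMem (he x hx)
    rw [image_image, hcard, ← image_image, hC.image_card, image_add_right_Icc]

end IsSaturatedChain

end ChainsOfSets

section ChainDecompositions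

variable {α : Type*} [DecidableEq α]

/-- Families of finite sets that can be partitioned into saturated chains, each having minimal and
maximal cardinalities `a`, `b` with `lo ≤ a + b ≤ hi`. For families of subsets of an
`n`-element set and `lo = hi = n`, this is a symmetric chain decomposition. -/
inductive ChainDecomposable (lo hi : ℕ) : Finset (Finset α) → Prop
  | chain {a b : ℕ} {C : Finset (Finset α)} :
      IsSaturatedChain a b C → lo ≤ a + b → a + b ≤ hi → ChainDecomposable lo hi C
  | union {F F' : Finset (Finset α)} :
      ChainDecomposable lo hi F → ChainDecomposable lo hi F' → Disjoint F F' →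
        ChainDecomposable lo hi (F ∪ F')

/-- The family of the sets `x` and `x ∪ {e}`, for `x` in the family `F`. -/
def adjoinPoint (e : α) (F : Finset (Finset α)) : Finset (Finset α) :=
  F ∪ F.image (insert e)

lemma mem_adjoinPoint {e : α} {F : Finset (Finset α)} (he : ∀ x ∈ F, e ∉ x) {x : Finset α} :
    x ∈ adjoinPoint e F ↔ x.erase e ∈ F := by
  rw [adjoinPoint, mem_union, mem_image]
  constructor
  · rintro (hx | ⟨y, hy, rfl⟩)
    · rwa [erase_eq_of_notMem (he x hx)]
    · rwa [erase_insert (he y hy)]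
  · intro hx
    by_cases hex : e ∈ x
    · exact Or.inr ⟨_, hx, insert_erase hex⟩
    · exact Or.inl (by rwa [erase_eq_of_notMem hex] at hx)

lemma adjoinPoint_union (e : α) (F F' : Finset (Finset α)) :
    adjoinPoint e (F ∪ F') = adjoinPoint e F ∪ adjoinPoint e F' := by
  rw [adjoinPoint, image_union, union_union_union_comm]
  rfl

lemma disjoint_adjoinPoint {e : α} {F F' : Finset (Finset α)} (he : ∀ x ∈ F, e ∉ x)
    (he' : ∀ x ∈ F', e ∉ x) (hd : Disjoint F F') :
    Disjoint (adjoinPoint e F) (adjoinPoint e F') :=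
  disjoint_left.2 fun _ hx hx' =>
    disjoint_left.1 hd ((mem_adjoinPoint he).1 hx) ((mem_adjoinPoint he').1 hx')

/-- If `t` is the top of `C`, moving `t ∪ {e}` from the chain `{x ∪ {e} | x ∈ C}` to `C` leaves two
saturated chains, with cardinalities `[a + 1, b]` and `[a, b + 1]`. -/
lemma IsSaturatedChain.chainDecomposable_adjoinPoint {a b : ℕ} {C : Finset (Finset α)}
    (hC : IsSaturatedChain a b C) {e : α} (he : ∀ x ∈ C, e ∉ x) :
    ChainDecomposable (a + b + 1) (a + b + 1) (adjoinPoint e C) := by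
  rcases lt_or_ge b a with hba | hab
  · obtain rfl : C = ∅ := card_eq_zero.1 (by rw [hC.card_eq]; omega)
    have hempty : IsSaturatedChain (a + 1) b (adjoinPoint e ∅) :=
      ⟨by simp [adjoinPoint], by rw [Icc_eq_empty (by omega)]; simp [adjoinPoint]⟩
    exact .chain hempty (by omega) (by omega)
  obtain ⟨t, ht, htb⟩ := mem_image.1 (hC.image_card.symm ▸ right_mem_Icc.2 hab)
  have htop : #(insert e t) = b + 1 := by rw [card_insert_of_notMem (he t ht), htb]
  have hmem : insert e t ∈ C.image (insert e) := mem_image_of_mem _ ht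
  have hlong : IsSaturatedChain a (b + 1) (insert (insert e t) C) :=
    hC.insert_top (fun x hx => (hC.subset_of_card_eq_right hx ht htb).trans (subset_insert _ _))
      htop (by omega)
  have hshort : IsSaturatedChain (a + 1) b ((C.image (insert e)).erase (insert e t)) :=
    (hC.image_insert he).erase_top hmem htop
  have hdisj : Disjoint (insert (insert e t) C) ((C.image (insert e)).erase (insert e t)) := by
    refine disjoint_insert_left.2 ⟨notMem_erase _ _, disjoint_left.2 fun x hx hx' => he x hx ?_⟩
    obtain ⟨y, -, rfl⟩ := mem_image.1 (mem_of_mem_erase hx')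
    exact mem_insert_self e y
  have hunion : adjoinPoint e C =
      insert (insert e t) C ∪ (C.image (insert e)).erase (insert e t) := by
    rw [insert_union, ← union_insert, insert_erase hmem, adjoinPoint]
  rw [hunion]
  exact .union (.chain hlong (by omega) (by omega)) (.chain hshort (by omega) (by omega)) hdisj

lemma IsSaturatedChain.exists_erase_empty {a b : ℕ} {C : Finset (Finset α)}
    (hC : IsSaturatedChain a b C) :
    ∃ a', a ≤ a' ∧ a' ≤ a + 1 ∧ IsSaturatedChain a' b (C.erase ∅) := by
  by_cases hmem : ∅ ∈ C
  · have ha : a = 0 := by simpa using (mem_Icc.1 (hC.card_mem_Icc hmem)).1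
    exact ⟨a + 1, by omega, le_rfl, hC.erase_bot hmem (by simp [ha])⟩
  · exact ⟨a, le_rfl, by omega, by rwa [erase_eq_of_notMem hmem]⟩

namespace ChainDecomposable

variable {lo hi : ℕ} {F : Finset (Finset α)}

lemma mono {lo' hi' : ℕ} (hF : ChainDecomposable lo hi F) (hlo : lo' ≤ lo) (hhi : hi ≤ hi') :
    ChainDecomposable lo' hi' F := by
  induction hF with
  | chain hC h₁ h₂ => exact .chain hC (by omega) (by omega)
  | union _ _ hd ih ih' => exact .union ih ih' hd

lemma adjoinPoint {e : α} (hF : ChainDecomposable lo hi F) (he : ∀ x ∈ F, e ∉ x) :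
    ChainDecomposable (lo + 1) (hi + 1) (adjoinPoint e F) := by
  induction hF with
  | chain hC h₁ h₂ =>
    exact (hC.chainDecomposable_adjoinPoint he).mono (by omega) (by omega)
  | union _ _ hd ih ih' =>
    have heF := fun x hx => he x (mem_union_left _ hx)
    have heF' := fun x hx => he x (mem_union_right _ hx)
    rw [adjoinPoint_union]
    exact .union (ih heF) (ih' heF') (disjoint_adjoinPoint heF heF' hd)

lemma erase_empty (hF : ChainDecomposable lo hi F) : ChainDecomposable lo (hi + 1) (F.erase ∅) := by
  induction hF with
  | chain hC h₁ h₂ =>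
    obtain ⟨a', ha, ha', hC'⟩ := hC.exists_erase_empty
    exact .chain hC' (by omega) (by omega)
  | union _ _ hd ih ih' =>
    rw [erase_union_distrib]
    exact .union ih ih' (hd.mono (erase_subset _ _) (erase_subset _ _))

end ChainDecomposable

lemma chainDecomposable_powerset (K : Finset α) : ChainDecomposable #K #K K.powerset := by
  induction K using Finset.induction_on with
  | empty => exact .chain (a := 0) (b := 0) ⟨by simp, by simp⟩ (by simp) (by simp)
  | insert e K he ih =>
    rw [powerset_insert, card_insert_of_notMem he]
    exact ih.adjoinPoint fun x hx hex => he (mem_powerset.1 hx hex)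

lemma chainDecomposable_filter_not_disjoint {K S : Finset α} (hKS : Disjoint K S) :
    ChainDecomposable #(K ∪ S) (#(K ∪ S) + 1) {x ∈ (K ∪ S).powerset | ¬ Disjoint x K} := by
  induction S using Finset.induction_on with
  | empty =>
    have hfilter : {x ∈ K.powerset | ¬ Disjoint x K} = K.powerset.erase ∅ := by
      ext x
      rw [mem_filter, mem_erase, mem_powerset, and_comm, and_congr_left_iff]
      exact fun hx => not_congr ⟨fun h => disjoint_self.1 (h.mono_right hx), by rintro rfl; simp⟩
    rw [union_empty, hfilter]
    exact (chainDecomposable_powerset K).erase_empty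
  | insert e S he ih =>
    obtain ⟨heK, hKS⟩ := disjoint_insert_right.1 hKS
    have heKS : e ∉ K ∪ S := by simp [heK, he]
    have hfilter : {x ∈ (insert e (K ∪ S)).powerset | ¬ Disjoint x K} =
        adjoinPoint e {x ∈ (K ∪ S).powerset | ¬ Disjoint x K} := by
      simp only [powerset_insert, filter_union, filter_image, disjoint_insert_left, heK,
        not_false_eq_true, true_and, adjoinPoint]
    rw [union_insert, card_insert_of_notMem heKS, hfilter]
    exact (ih hKS).adjoinPoint fun x hx hex =>
      heKS (mem_powerset.1 (mem_filter.1 hx).1 hex)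

end ChainDecompositions

section FamiliesWithoutLongChains

lemma card_le_two_of_isChain_of_subset_union {β : Type*} {r : β → β → Prop} {C : Finset β}
    {U V : Set β} (hC : IsChain r (C : Set β)) (hU : IsAntichain r U) (hV : IsAntichain r V)
    (hCUV : (C : Set β) ⊆ U ∪ V) : #C ≤ 2 := by
  classical
  have card_filter_le_one {W : Set β} (hW : IsAntichain r W) : #{x ∈ C | x ∈ W} ≤ 1 :=
    card_le_one.2 fun x hx y hy =>
      inter_subsingleton_of_isChain_of_isAntichain hC hW (mem_filter.1 hx) (mem_filter.1 hy)
  calc #C = #({x ∈ C | x ∈ U} ∪ {x ∈ C | x ∈ V}) := by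
        rw [← filter_or, filter_true_of_mem (p := fun x => x ∈ U ∨ x ∈ V) fun x hx => hCUV hx]
    _ ≤ #{x ∈ C | x ∈ U} + #{x ∈ C | x ∈ V} := card_union_le _ _
    _ ≤ 2 := add_le_add (card_filter_le_one hU) (card_filter_le_one hV)

lemma min_le_card_Icc_inter_Icc {a b p q : ℕ} (h₁ : a + b ≤ p + q + 1)
    (h₂ : p + q ≤ a + b + 1) : min (b + 1 - a) (q + 1 - p) ≤ #(Icc a b ∩ Icc p q) := by
  have hinter : Icc a b ∩ Icc p q = Icc (max a p) (min b q) := by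
    ext i
    simp only [mem_inter, mem_Icc]
    omega
  rw [hinter, Nat.card_Icc]
  omega

variable {α : Type*} [DecidableEq α] {p q : ℕ} {𝒜 : Finset (Finset α)}

lemma IsSaturatedChain.card_inter_le {a b : ℕ} {C : Finset (Finset α)}
    (hC : IsSaturatedChain a b C) (h₁ : a + b ≤ p + q + 1) (h₂ : p + q ≤ a + b + 1)
    (h𝒜 : ∀ D ⊆ 𝒜, IsChain (· ⊆ ·) (D : Set (Finset α)) → #D ≤ q + 1 - p) :
    #(C ∩ 𝒜) ≤ #{x ∈ C | #x ∈ Icc p q} := by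
  have hle_card : #(C ∩ 𝒜) ≤ b + 1 - a := hC.card_eq ▸ card_le_card inter_subset_left
  have hle_chain : #(C ∩ 𝒜) ≤ q + 1 - p :=
    h𝒜 _ inter_subset_right (hC.isChain.mono (by simp))
  rw [hC.card_filter_card_mem]
  exact (le_min hle_card hle_chain).trans (min_le_card_Icc_inter_Icc h₁ h₂)

lemma ChainDecomposable.card_inter_le {lo hi : ℕ} {F : Finset (Finset α)}
    (hF : ChainDecomposable lo hi F) (hhi : hi ≤ p + q + 1) (hlo : p + q ≤ lo + 1)
    (h𝒜 : ∀ D ⊆ 𝒜, IsChain (· ⊆ ·) (D : Set (Finset α)) → #D ≤ q + 1 - p) :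
    #(F ∩ 𝒜) ≤ #{x ∈ F | #x ∈ Icc p q} := by
  induction hF with
  | chain hC h₁ h₂ => exact hC.card_inter_le (by omega) (by omega) h𝒜
  | @union F F' _ _ hd ih ih' =>
    calc #((F ∪ F') ∩ 𝒜) ≤ #(F ∩ 𝒜) + #(F' ∩ 𝒜) := by
          rw [union_inter_distrib_right]
          exact card_union_le _ _
      _ ≤ #{x ∈ F | #x ∈ Icc p q} + #{x ∈ F' | #x ∈ Icc p q} := add_le_add ih ih'
      _ = #{x ∈ F ∪ F' | #x ∈ Icc p q} := by
          rw [filter_union, card_union_of_disjoint (disjoint_filter_filter hd)]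

theorem card_le_card_filter_not_subset [Fintype α] (G : Finset α) (h𝒜G : ∀ x ∈ 𝒜, ¬ x ⊆ G)
    (hpq : Fintype.card α ≤ p + q) (hpq' : p + q ≤ Fintype.card α + 1)
    (h𝒜 : ∀ D ⊆ 𝒜, IsChain (· ⊆ ·) (D : Set (Finset α)) → #D ≤ q + 1 - p) :
    #𝒜 ≤ #{x : Finset α | #x ∈ Icc p q ∧ ¬ x ⊆ G} := by
  have hdec : ChainDecomposable (Fintype.card α) (Fintype.card α + 1)
      ({x | ¬ x ⊆ G} : Finset (Finset α)) := by
    simpa only [union_comm Gᶜ, union_compl, powerset_univ, card_univ, disjoint_compl_right_iff]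
      using chainDecomposable_filter_not_disjoint (disjoint_compl_left (a := G))
  have hsub : 𝒜 ⊆ ({x | ¬ x ⊆ G} : Finset (Finset α)) := fun x hx => by simpa using h𝒜G x hx
  have hle := hdec.card_inter_le (by omega) hpq' h𝒜
  rwa [inter_eq_right.2 hsub, filter_filter, filter_congr fun x _ => and_comm] at hle

end FamiliesWithoutLongChains

section BinaryTuples

/-- The order isomorphism taking a binary tuple to its support, the set of the positions of its
1-components. -/
def supportOrderIso (ι : Type*) [Fintype ι] [DecidableEq ι] : (ι → Bool) ≃o Finset ι where
  toFun α := {i | α i = true}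
  invFun x i := decide (i ∈ x)
  left_inv α := by simp
  right_inv x := by simp
  map_rel_iff' := by simp [subset_iff, Pi.le_def, Bool.le_iff_imp]

variable {n s : ℕ}

lemma card_supportOrderIso (α : Fin n → Bool) : #(supportOrderIso (Fin n) α) = bweight α := rfl

lemma bweight_strictMono : StrictMono (bweight : (Fin n → Bool) → ℕ) :=
  card_strictMono.comp (supportOrderIso (Fin n)).strictMono

lemma isAntichain_setOf_bweight_eq (w : ℕ) :
    IsAntichain (· ≤ ·) {α : Fin n → Bool | bweight α = w} :=
  fun _ hα _ hβ hne hle => (bweight_strictMono (hle.lt_of_ne hne)).ne (hα.trans hβ.symm)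

lemma not_ge_of_not_le_of_bweight_le {α γ : Fin n → Bool} (hαγ : ¬ α ≤ γ)
    (hw : bweight α ≤ bweight γ) : ¬ γ ≤ α :=
  fun hle => (bweight_strictMono (hle.lt_of_not_ge hαγ)).not_ge hw

lemma bweight_gammaTuple (hs : s ≤ n) : bweight (gammaTuple n s) = s := by
  have hmap : (univ.filter fun i => gammaTuple n s i = true).map Fin.valEmbedding =
      Ico (n - s) n := by
    ext i
    simp only [gammaTuple, decide_eq_true_eq, mem_map, mem_filter_univ, Fin.valEmbedding_apply,
      mem_Ico]
    exact ⟨fun ⟨j, hj, hji⟩ => hji ▸ ⟨hj, j.isLt⟩, fun hi => ⟨⟨i, hi.2⟩, hi.1, rfl⟩⟩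
  rw [bweight, ← card_map Fin.valEmbedding, hmap, Nat.card_Ico]
  omega

lemma ncard_le_of_subset_union_of_isAntichain {γ : Fin n → Bool} {U V W : Set (Fin n → Bool)}
    (hU : IsAntichain (· ≤ ·) U) (hV : IsAntichain (· ≤ ·) V) (hWUV : W ⊆ U ∪ V)
    (hWγ : ∀ α ∈ W, ¬ α ≤ γ) :
    W.ncard ≤ {α : Fin n → Bool | bweight α ∈ Icc (n / 2) (n / 2 + 1) ∧ ¬ α ≤ γ}.ncard := by
  classical
  let f := supportOrderIso (Fin n)
  have hbound : #(W.toFinset.image f) ≤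
      #{x : Finset (Fin n) | #x ∈ Icc (n / 2) (n / 2 + 1) ∧ ¬ x ⊆ f γ} := by
    refine card_le_card_filter_not_subset (f γ) ?_ (by rw [Fintype.card_fin]; omega)
      (by rw [Fintype.card_fin]; omega) fun D hDW hD => ?_
    · simpa [f.le_iff_le] using hWγ
    · have hDUV : (D : Set (Finset (Fin n))) ⊆ f '' U ∪ f '' V := by
        rw [← Set.image_union]
        exact fun x hx => Set.image_mono hWUV (by simpa using hDW hx)
      have := card_le_two_of_isChain_of_subset_union hD (hU.image_iso f) (hV.image_iso f) hDUV
      omega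
  calc W.ncard = #(W.toFinset.image f) := by
        rw [card_image_of_injective _ f.injective, Set.ncard_eq_toFinset_card']
    _ ≤ #{x : Finset (Fin n) | #x ∈ Icc (n / 2) (n / 2 + 1) ∧ ¬ x ⊆ f γ} := hbound
    _ = {α : Fin n → Bool | bweight α ∈ Icc (n / 2) (n / 2 + 1) ∧ ¬ α ≤ γ}.ncard := by
        rw [← Set.ncard_coe_finset, ← Set.ncard_preimage_of_injective_subset_range f.injective
          (by simp [f.surjective.range_eq])]
        congr 1
        ext α
        simp [f, card_supportOrderIso]

lemma AntichainPair.ncard_add_ncard {U' U'' : Set (Fin n → Bool)} (h : AntichainPair U' U'') :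
    U'.ncard + U''.ncard = (U' ∪ U'').ncard :=
  (Set.ncard_union_eq (Set.disjoint_left.2 fun α hα hα' => h.2.2 α hα α hα' le_rfl)).symm

lemma MemA.not_le_gammaTuple {U' U'' : Set (Fin n → Bool)} (h : MemA s U' U'') :
    ∀ α ∈ (U' ∪ U'') \ {gammaTuple n s}, ¬ α ≤ gammaTuple n s := by
  obtain ⟨⟨hU', -, hlt⟩, hγ⟩ := h
  rintro α ⟨hα | hα, hne⟩
  · exact hU' hα hγ hne
  · exact hlt _ hγ α hα

lemma MemA.ncard_add_ncard {U' U'' : Set (Fin n → Bool)} (h : MemA s U' U'') :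
    U'.ncard + U''.ncard = ((U' ∪ U'') \ {gammaTuple n s}).ncard + 1 := by
  rw [h.1.ncard_add_ncard, Set.ncard_sdiff_singleton_add_one (Set.mem_union_left _ h.2)]

lemma memA_lowerAntichain_upperAntichain (n s : ℕ) :
    MemA s (lowerAntichain n s) (upperAntichain n s) := by
  refine ⟨⟨?_, (isAntichain_setOf_bweight_eq _).subset fun α hα => hα.1, ?_⟩, Set.mem_insert _ _⟩
  · exact ((isAntichain_setOf_bweight_eq (n / 2)).subset fun α hα => hα.1).insert
      (fun β hβ _ => hβ.2.1) (fun β hβ _ => hβ.2.2)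
  · rintro α (rfl | hα) β hβ hle
    · exact hβ.2.1 hle
    · have hw := bweight_strictMono.monotone hle
      rw [hα.1, hβ.1] at hw
      omega

lemma setOf_bweight_mem_Icc_subset (hs1 : n < 2 * s) (hs2 : s ≤ n) :
    {α | bweight α ∈ Icc (n / 2) (n / 2 + 1) ∧ ¬ α ≤ gammaTuple n s} ⊆
      (lowerAntichain n s ∪ upperAntichain n s) \ {gammaTuple n s} := by
  rintro α ⟨hw, hα⟩
  rw [mem_Icc] at hw
  have hα' : ¬ gammaTuple n s ≤ α :=
    not_ge_of_not_le_of_bweight_le hα (by rw [bweight_gammaTuple hs2]; omega)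
  refine ⟨?_, fun h => hα h.le⟩
  obtain hw | hw : bweight α = n / 2 ∨ bweight α = n / 2 + 1 := by omega
  · exact Or.inl (Or.inr ⟨hw, hα, hα'⟩)
  · exact Or.inr ⟨hw, hα, hα'⟩

end BinaryTuples

/-- For any integer `s` with `n/2 < s ≤ n`, let `T'` consist
of `γ_s` together with all tuples of weight `⌊n/2⌋` that are incomparable with
`γ_s`, and let `T''` consist of all tuples of weight `⌊n/2⌋ + 1` that are
incomparable with `γ_s`. Then `(T', T'') ∈ 𝒜_s` and `(T', T'')` has the maximum
cardinality among all pairs in `𝒜_s`. -/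
theorem explicit_max_pair_in_A {n s : ℕ} (hs1 : n < 2 * s) (hs2 : s ≤ n) :
    MemA s (lowerAntichain n s) (upperAntichain n s) ∧
    ∀ U' U'' : Set (Fin n → Bool), MemA s U' U'' →
      U'.ncard + U''.ncard ≤
        (lowerAntichain n s).ncard + (upperAntichain n s).ncard := by
  have hmax := memA_lowerAntichain_upperAntichain n s
  refine ⟨hmax, fun U' U'' hU => ?_⟩
  rw [hU.ncard_add_ncard, hmax.ncard_add_ncard, Nat.add_le_add_iff_right]
  calc ((U' ∪ U'') \ {gammaTuple n s}).ncard
      ≤ {α | bweight α ∈ Icc (n / 2) (n / 2 + 1) ∧ ¬ α ≤ gammaTuple n s}.ncard :=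
        ncard_le_of_subset_union_of_isAntichain hU.1.1 hU.1.2.1 Set.sdiff_subset
          hU.not_le_gammaTuple
    _ ≤ ((lowerAntichain n s ∪ upperAntichain n s) \ {gammaTuple n s}).ncard :=
        Set.ncard_le_ncard (setOf_bweight_mem_Icc_subset hs1 hs2)
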